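/- Let ε ∈ (0,1), μ ∈ [ε, 1], and define the kernel K on [0,1] × [0,1] by K(x,y) = 1{x ∈ [y,μ]}/|y − μ| if |y − μ| ≥ ε (where [y,μ] denotes the segment between y and μ), and K(x,y) = 1{x ∈ [μ−ε, μ]}/ε if |y − μ| < ε. For a probability measure p on [0,1] set Kp(x) = ∫ K(x,y) dp(y) and K^(2)p(x) = ∫ K(x,y)² dp(y). Then for every probability measure p on [0,1], one has ∫₀¹ K^(2)p(x)/(Kp(x)) dx ≤ 2·(1 + log(1/ε)) (the integrand being interpreted as 0 where Kp(x) = 0). -/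

import Mathlib

open MeasureTheory Real

noncomputable section

/-- The one-dimensional kernel of Section 3: `K(x,y)` is the density (in `x`) of the
uniform distribution on the segment `[y, μ]` if `|y - μ| ≥ ε`, and of the uniform
distribution on `[μ - ε, μ]` otherwise. -/
def kernel1d (ε μ : ℝ) (x y : ℝ) : ℝ :=
  if ε ≤ |y - μ| then (Set.uIcc y μ).indicator 1 x / |y - μ|
  else (Set.Icc (μ - ε) μ).indicator 1 x / ε

lemma kernel1d_nonneg {ε : ℝ} (hε : 0 < ε) (μ x y : ℝ) : 0 ≤ kernel1d ε μ x y := by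
  unfold kernel1d
  split_ifs
  · exact div_nonneg (Set.indicator_nonneg (fun _ _ => zero_le_one) _) (abs_nonneg _)
  · exact div_nonneg (Set.indicator_nonneg (fun _ _ => zero_le_one) _) hε.le

lemma kernel1d_le {ε : ℝ} (hε : 0 < ε) (μ x y : ℝ) :
    kernel1d ε μ x y ≤ (max |x - μ| ε)⁻¹ := by
  have hmax : 0 < max |x - μ| ε := lt_max_of_lt_right hε
  unfold kernel1d
  split_ifs with h
  · by_cases hx : x ∈ Set.uIcc y μ
    · rw [Set.indicator_of_mem hx, Pi.one_apply, one_div]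
      exact inv_anti₀ hmax
        (max_le (Set.abs_sub_left_of_mem_uIcc (Set.uIcc_comm y μ ▸ hx)) h)
    · rw [Set.indicator_of_notMem hx, zero_div]
      exact inv_nonneg.2 hmax.le
  · by_cases hx : x ∈ Set.Icc (μ - ε) μ
    · rw [Set.indicator_of_mem hx, Pi.one_apply, one_div]
      exact inv_anti₀ hmax (max_le (abs_le.2 ⟨by linarith [hx.1], by linarith [hx.2]⟩) le_rfl)
    · rw [Set.indicator_of_notMem hx, zero_div]
      exact inv_nonneg.2 hmax.le

/-- If `0 ≤ f ≤ c`, then `∫ f² ≤ c ∫ f`; in quotient form this needs no integrability, since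
the quotient is zero when `f` is not integrable. -/
lemma integral_sq_div_integral_le {α : Type*} [MeasurableSpace α] (p : Measure α) {f : α → ℝ}
    {c : ℝ} (hc : 0 ≤ c) (hf : ∀ y, 0 ≤ f y) (hfc : ∀ y, f y ≤ c) :
    (∫ y, f y ^ 2 ∂p) / ∫ y, f y ∂p ≤ c := by
  by_cases hint : Integrable f p
  · refine div_le_of_le_mul₀ (integral_nonneg hf) hc ?_
    rw [← integral_const_mul]
    refine integral_mono_of_nonneg (.of_forall fun y => sq_nonneg _) (hint.const_mul c)
      (.of_forall fun y => ?_)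
    simpa only [sq] using mul_le_mul_of_nonneg_right (hfc y) (hf y)
  · rwa [integral_undef hint, div_zero]

lemma continuous_inv_max_abs {ε : ℝ} (hε : 0 < ε) : Continuous fun t : ℝ => (max |t| ε)⁻¹ :=
  (continuous_abs.max continuous_const).inv₀ fun _ => (lt_max_of_lt_right hε).ne'

lemma integral_inv_max_abs {ε : ℝ} (hε : 0 < ε) (hε1 : ε ≤ 1) :
    ∫ t in (-1 : ℝ)..1, (max |t| ε)⁻¹ = 2 * (1 + Real.log (1 / ε)) := by
  have hint (a b : ℝ) : IntervalIntegrable (fun t : ℝ => (max |t| ε)⁻¹) volume a b :=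
    (continuous_inv_max_abs hε).intervalIntegrable a b
  have hinner : ∫ t in (0 : ℝ)..ε, (max |t| ε)⁻¹ = 1 := by
    have : ∫ t in (0 : ℝ)..ε, (max |t| ε)⁻¹ = ∫ _ in (0 : ℝ)..ε, ε⁻¹ := by
      refine intervalIntegral.integral_congr fun t ht => ?_
      rw [Set.uIcc_of_le hε.le] at ht
      simp only [abs_of_nonneg ht.1, max_eq_right ht.2]
    rw [this, intervalIntegral.integral_const, sub_zero, smul_eq_mul, mul_inv_cancel₀ hε.ne']
  have houter : ∫ t in ε..1, (max |t| ε)⁻¹ = Real.log (1 / ε) := by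
    rw [← integral_inv_of_pos hε one_pos]
    refine intervalIntegral.integral_congr fun t ht => ?_
    rw [Set.uIcc_of_le hε1] at ht
    simp only [abs_of_pos (hε.trans_le ht.1), max_eq_left ht.1]
  have hhalf : ∫ t in (0 : ℝ)..1, (max |t| ε)⁻¹ = 1 + Real.log (1 / ε) := by
    rw [← intervalIntegral.integral_add_adjacent_intervals (hint 0 ε) (hint ε 1), hinner, houter]
  have hneg : ∫ t in (-1 : ℝ)..0, (max |t| ε)⁻¹ = ∫ t in (0 : ℝ)..1, (max |t| ε)⁻¹ := by
    simpa using (intervalIntegral.integral_comp_neg (a := (0 : ℝ)) (b := 1)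
      fun t : ℝ => (max |t| ε)⁻¹).symm
  rw [← intervalIntegral.integral_add_adjacent_intervals (hint (-1) 0) (hint 0 1), hneg, hhalf]
  ring

/-- **Variance bound for the one-dimensional kernel (Section 3).** For every probability
measure `p` on `[0,1]`, `∫₀¹ K⁽²⁾p(x) / Kp(x) dx ≤ 2(1 + log(1/ε))` (with the convention
that the integrand is `0` where `Kp(x) = 0`, which is Lean's convention for `·/0`). -/
theorem kernel1d_variance_bound
    (ε μ : ℝ) (hε : ε ∈ Set.Ioo (0 : ℝ) 1) (hμ : μ ∈ Set.Icc ε 1)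
    (p : Measure ℝ) [IsProbabilityMeasure p] (hpsupp : p (Set.Icc (0 : ℝ) 1)ᶜ = 0) :
    ∫ x in Set.Icc (0 : ℝ) 1,
        (∫ y, kernel1d ε μ x y ^ 2 ∂p) / ∫ y, kernel1d ε μ x y ∂p
      ≤ 2 * (1 + Real.log (1 / ε)) := by
  have hε0 : 0 < ε := hε.1
  have hμ0 : 0 ≤ μ := hε0.le.trans hμ.1
  have hcont : Continuous fun x : ℝ => (max |x - μ| ε)⁻¹ :=
    (continuous_inv_max_abs hε0).comp (continuous_id.sub continuous_const)
  have hmaj_nonneg (x : ℝ) : 0 ≤ (max |x - μ| ε)⁻¹ :=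
    inv_nonneg.2 (hε0.le.trans (le_max_right _ _))
  calc ∫ x in Set.Icc (0 : ℝ) 1, (∫ y, kernel1d ε μ x y ^ 2 ∂p) / ∫ y, kernel1d ε μ x y ∂p
      ≤ ∫ x in Set.Icc (0 : ℝ) 1, (max |x - μ| ε)⁻¹ :=
        integral_mono_of_nonneg
          (.of_forall fun x => div_nonneg (integral_nonneg fun y => sq_nonneg _)
            (integral_nonneg (kernel1d_nonneg hε0 μ x)))
          hcont.continuousOn.integrableOn_Icc
          (.of_forall fun x => integral_sq_div_integral_le p (hmaj_nonneg x)
            (kernel1d_nonneg hε0 μ x) (kernel1d_le hε0 μ x))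
    _ ≤ ∫ x in Set.Icc (-1 + μ) (1 + μ), (max |x - μ| ε)⁻¹ :=
        setIntegral_mono_set hcont.continuousOn.integrableOn_Icc (.of_forall hmaj_nonneg)
          (Set.Icc_subset_Icc (by linarith [hμ.2]) (by linarith)).eventuallyLE
    _ = ∫ x in (-1 + μ)..(1 + μ), (max |x - μ| ε)⁻¹ := by
        rw [intervalIntegral.integral_of_le (by linarith), integral_Icc_eq_integral_Ioc]
    _ = ∫ t in (-1 : ℝ)..1, (max |t| ε)⁻¹ := by
        rw [intervalIntegral.integral_comp_sub_right fun t : ℝ => (max |t| ε)⁻¹]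
        simp only [add_sub_cancel_right]
    _ = 2 * (1 + Real.log (1 / ε)) := integral_inv_max_abs hε0 hε.2.le
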